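/- Let σ* be the strategy profile in the Prisoner's Dilemma Markov Commitment Game in which each player i uses σ*_i = (C, ψ*_i, D), where ψ*_i commits (outputs 1) if and only if the opponent's proposal is C (the value of ψ*_i on the joint proposal (D,D) may be fixed to either 0 or 1). Then σ* is a pure-strategy Nash equilibrium: for each player i and every alternative pure strategy τ_i = (m, ψ, a), the payoff of player i under (τ_i, σ*_{-i}) is at most the payoff of player i under σ*, which equals −1. -/

import Mathlib

/-- Action in the Prisoner's Dilemma: cooperate or defect. -/
inductive Act : Type
  | C : Act
  | D : Act
deriving DecidableEq

open Act

/-- Payoff function of the Prisoner's Dilemma. -/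
noncomputable def u : Act → Act → ℝ × ℝ
  | C, C => (-1, -1)
  | C, D => (-3, 0)
  | D, C => (0, -3)
  | D, D => (-2, -2)

/-- A pure strategy in the PD Markov Commitment Game: a proposal, a commitment
rule on the joint proposal (`true` = commit), and an independent action. -/
structure Strat : Type where
  m : Act
  ψ : Act → Act → Bool
  a : Act

/-- The executed joint action: the joint proposal if both players commit,
otherwise the independent actions. -/
def exec (s1 s2 : Strat) : Act × Act :=
  if s1.ψ s1.m s2.m = true ∧ s2.ψ s1.m s2.m = true then (s1.m, s2.m) else (s1.a, s2.a)

/-- Player 1's payoff. -/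
noncomputable def pay1 (s1 s2 : Strat) : ℝ := (u (exec s1 s2).1 (exec s1 s2).2).1

/-- Player 2's payoff. -/
noncomputable def pay2 (s1 s2 : Strat) : ℝ := (u (exec s1 s2).1 (exec s1 s2).2).2

/-- Player 1's equilibrium commitment rule: commit iff the opponent's proposal is C. -/
def ψstar1 : Act → Act → Bool := fun _ m2 => match m2 with | C => true | D => false

/-- Player 2's equilibrium commitment rule: commit iff the opponent's proposal is C. -/
def ψstar2 : Act → Act → Bool := fun m1 _ => match m1 with | C => true | D => false

theorem u_swap (a b : Act) : u b a = (u a b).swap := by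
  cases a <;> cases b <;> rfl

theorem u_C_left_fst_le (b : Act) : (u C b).1 ≤ -1 := by
  cases b <;> norm_num [u]

theorem u_D_right_fst_le (a : Act) : (u a D).1 ≤ -2 := by
  cases a <;> norm_num [u]

/-- The same strategy played from the other seat. A commitment rule reads the joint proposal in
the order (player 1, player 2), so changing seats exchanges its arguments. -/
def Strat.swap (s : Strat) : Strat := ⟨s.m, fun m1 m2 => s.ψ m2 m1, s.a⟩

theorem exec_swap (s1 s2 : Strat) : exec s2.swap s1.swap = (exec s1 s2).swap := by
  simp only [exec, Strat.swap, and_comm, apply_ite Prod.swap, Prod.swap_prod_mk]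

theorem pay2_eq_pay1_swap (s1 s2 : Strat) : pay2 s1 s2 = pay1 s2.swap s1.swap := by
  simp only [pay1, pay2, exec_swap, Prod.fst_swap, Prod.snd_swap,
    u_swap (exec s1 s2).1 (exec s1 s2).2]

section Payoffs

variable {s1 s2 : Strat}

theorem pay1_of_commit (h1 : s1.ψ s1.m s2.m = true) (h2 : s2.ψ s1.m s2.m = true) :
    pay1 s1 s2 = (u s1.m s2.m).1 := by
  rw [pay1, exec, if_pos ⟨h1, h2⟩]

theorem pay1_of_not_commit (h : ¬(s1.ψ s1.m s2.m = true ∧ s2.ψ s1.m s2.m = true)) :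
    pay1 s1 s2 = (u s1.a s2.a).1 := by
  rw [pay1, exec, if_neg h]

theorem pay1_le_of_refuses_defection (h_refuse : s2.ψ D s2.m = false) (h_act : s2.a = D) :
    pay1 s1 s2 ≤ -1 := by
  by_cases h : s1.ψ s1.m s2.m = true ∧ s2.ψ s1.m s2.m = true
  · have h_prop : s1.m = C := by
      cases hm : s1.m with
      | C => rfl
      | D => simp [hm, h_refuse] at h
    calc pay1 s1 s2 = (u C s2.m).1 := by rw [pay1_of_commit h.1 h.2, h_prop]
      _ ≤ -1 := u_C_left_fst_le s2.m
  · calc pay1 s1 s2 = (u s1.a D).1 := by rw [pay1_of_not_commit h, h_act]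
      _ ≤ -2 := u_D_right_fst_le s1.a
      _ ≤ -1 := by norm_num

theorem pay2_le_of_refuses_defection (h_refuse : s1.ψ s1.m D = false) (h_act : s1.a = D) :
    pay2 s1 s2 ≤ -1 := by
  rw [pay2_eq_pay1_swap]
  exact pay1_le_of_refuses_defection (s2 := s1.swap) h_refuse h_act

end Payoffs

theorem mutual_cooperation_nash_equilibrium_general
    (ψ1 ψ2 : Act → Act → Bool)
    (h1cc : ψ1 C C = true) (h1cd : ψ1 C D = false)
    (h2cc : ψ2 C C = true) (h2dc : ψ2 D C = false) :
    pay1 ⟨C, ψ1, D⟩ ⟨C, ψ2, D⟩ = -1 ∧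
    pay2 ⟨C, ψ1, D⟩ ⟨C, ψ2, D⟩ = -1 ∧
    (∀ τ : Strat, pay1 τ ⟨C, ψ2, D⟩ ≤ pay1 ⟨C, ψ1, D⟩ ⟨C, ψ2, D⟩) ∧
    (∀ τ : Strat, pay2 ⟨C, ψ1, D⟩ τ ≤ pay2 ⟨C, ψ1, D⟩ ⟨C, ψ2, D⟩) := by
  have h_pay1 : pay1 ⟨C, ψ1, D⟩ ⟨C, ψ2, D⟩ = -1 := pay1_of_commit h1cc h2cc
  have h_pay2 : pay2 ⟨C, ψ1, D⟩ ⟨C, ψ2, D⟩ = -1 :=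
    (pay2_eq_pay1_swap _ _).trans (pay1_of_commit h2cc h1cc)
  refine ⟨h_pay1, h_pay2, fun τ => ?_, fun τ => ?_⟩
  · rw [h_pay1]
    exact pay1_le_of_refuses_defection h2dc rfl
  · rw [h_pay2]
    exact pay2_le_of_refuses_defection h1cd rfl

/-- The profile in which each player proposes C, commits iff the opponent's proposal
is C (with the value on the joint proposal (D,D) arbitrary), and independently plays D,
is a pure-strategy Nash equilibrium of the PD Markov Commitment Game with payoff -1
for each player. -/
theorem mutual_cooperation_nash_equilibrium
    (ψ1 ψ2 : Act → Act → Bool)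
    (h1cc : ψ1 C C = true) (h1dc : ψ1 D C = true) (h1cd : ψ1 C D = false)
    (h2cc : ψ2 C C = true) (h2cd : ψ2 C D = true) (h2dc : ψ2 D C = false) :
    pay1 ⟨C, ψ1, D⟩ ⟨C, ψ2, D⟩ = -1 ∧
    pay2 ⟨C, ψ1, D⟩ ⟨C, ψ2, D⟩ = -1 ∧
    (∀ τ : Strat, pay1 τ ⟨C, ψ2, D⟩ ≤ pay1 ⟨C, ψ1, D⟩ ⟨C, ψ2, D⟩) ∧
    (∀ τ : Strat, pay2 ⟨C, ψ1, D⟩ τ ≤ pay2 ⟨C, ψ1, D⟩ ⟨C, ψ2, D⟩) :=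
  mutual_cooperation_nash_equilibrium_general ψ1 ψ2 h1cc h1cd h2cc h2dc
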